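/- arXiv:1309.4140 — 2 statements merged into one kernel-verified Lean document; each statement's English description precedes it below -/
import Mathlib

section
/- Let n be a natural number, let f : Fin n → ℝ be a nonnegative antitone function (f j ≥ f j' whenever j ≤ j'), and let k be a natural number with 1 ≤ k ≤ n. Then for every real number γ ≥ 0, k·γ + ∑_{j=0}^{n−1} max(f j − γ, 0) ≥ ∑_{j=0}^{k−1} f j, and equality holds when γ = f (k−1). -/
/-- Subtracting `k * γ` from the sum of the first `k` terms turns it into a sum over all of `Fin n`,
which can be compared termwise with `∑ j, max (f j - γ) 0`. -/
lemma sum_first_eq (n : ℕ) (f : Fin n → ℝ) (k : ℕ) (hkn : k ≤ n) (γ : ℝ) :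
    ∑ j ∈ Finset.univ.filter (fun j : Fin n => (j : ℕ) < k), f j
      = (k : ℝ) * γ + ∑ j : Fin n, if (j : ℕ) < k then f j - γ else 0 := by
  have hcard : (Finset.univ.filter (fun j : Fin n => (j : ℕ) < k)).card = k := by
    rw [Fin.card_filter_val_lt, min_eq_right hkn]
  rw [← Finset.sum_filter, Finset.sum_sub_distrib, Finset.sum_const, hcard, nsmul_eq_mul]
  ring

theorem stmt7 (n : ℕ) (f : Fin n → ℝ) (hf0 : ∀ j, 0 ≤ f j)
    (hf : Antitone f) (k : ℕ) (hk1 : 1 ≤ k) (hkn : k ≤ n) :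
    (∀ γ : ℝ, 0 ≤ γ →
      (k : ℝ) * γ + ∑ j : Fin n, max (f j - γ) 0
        ≥ ∑ j ∈ Finset.univ.filter (fun j : Fin n => (j : ℕ) < k), f j) ∧
    (k : ℝ) * f ⟨k - 1, by omega⟩
        + ∑ j : Fin n, max (f j - f ⟨k - 1, by omega⟩) 0
      = ∑ j ∈ Finset.univ.filter (fun j : Fin n => (j : ℕ) < k), f j := by
  refine ⟨fun γ _ => ?_, ?_⟩
  · rw [sum_first_eq n f k hkn γ, ge_iff_le]
    gcongr with j
    split_ifs
    · exact le_max_left _ _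
    · exact le_max_right _ _
  · rw [sum_first_eq n f k hkn (f ⟨k - 1, by omega⟩)]
    congr 1
    refine Finset.sum_congr rfl fun j _ => ?_
    -- `f` is antitone, so `f j - f (k - 1)` is `≥ 0` for `j < k` and `≤ 0` for `j ≥ k`.
    split_ifs with h
    · exact max_eq_left (sub_nonneg.2 (hf (Fin.mk_le_mk.2 (by omega))))
    · exact max_eq_right (sub_nonpos.2 (hf (Fin.mk_le_mk.2 (by omega))))
end

section
/- Let G be a connected simple graph on n vertices with m edges whose girth is a finite natural number g ≥ 3, and let T be a spanning tree of G (a connected acyclic subgraph of G on the same vertex set, which therefore has exactly n − 1 edges). Then ∑ over all edges {u,v} of G of dist_T(u,v) is at least (n − 1) + (m − (n − 1))·(g − 1). -/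
/-!
A tree edge has tree distance `1`. If `u v` is an edge of `G` outside the spanning tree `T`, the
geodesic from `v` to `u` in `T` is a path of `G` avoiding `u v`, so adding `u v` closes a cycle of
`G` of length `dist_T(u, v) + 1`, which is at least the girth. The bound follows by splitting the
sum over the edges of `G` into the `n - 1` tree edges and the remaining ones.
-/

theorem girth_sub_one_le_dist {V : Type*} {G T : SimpleGraph V} (hTG : T ≤ G) (hT : T.Connected)
    {u v : V} (hG : G.Adj u v) (hn : ¬ T.Adj u v) : G.girth - 1 ≤ T.dist u v := by
  obtain ⟨p, hp, hl⟩ := hT.exists_path_of_dist v u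
  have hc : (SimpleGraph.Walk.cons hG (p.mapLe hTG)).IsCycle := by
    rw [SimpleGraph.Walk.cons_isCycle_iff]
    refine ⟨hp.mapLe hTG, fun h => hn ?_⟩
    rw [SimpleGraph.Walk.edges_mapLe_eq_edges] at h
    exact p.adj_of_mem_edges h
  have h := SimpleGraph.girth_le_length hc
  rw [SimpleGraph.Walk.length_cons, SimpleGraph.Walk.length_mapLe, hl,
    SimpleGraph.dist_comm] at h
  omega

theorem stmt10 {V : Type*} [Fintype V] [DecidableEq V] (G : SimpleGraph V)
    [DecidableRel G.Adj] (hG : G.Connected)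
    (n m g : ℕ) (hn : Fintype.card V = n) (hm : G.edgeFinset.card = m)
    (hg3 : 3 ≤ g) (hgirth : G.girth = (g : ℕ∞))
    (T : SimpleGraph V) (hTG : T ≤ G) (hT : T.IsTree) :
    (n - 1) + (m - (n - 1)) * (g - 1)
      ≤ ∑ e ∈ G.edgeFinset,
          Sym2.lift ⟨fun x y => T.dist x y, fun x y => SimpleGraph.dist_comm⟩ e := by
  classical
  have hg : G.girth = g := by exact_mod_cast hgirth
  have hsub : T.edgeFinset ⊆ G.edgeFinset := SimpleGraph.edgeFinset_mono hTG
  have hcard : T.edgeFinset.card = n - 1 := by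
    have := hT.card_edgeFinset
    omega
  have hcard' : (G.edgeFinset \ T.edgeFinset).card = m - (n - 1) := by
    rw [Finset.card_sdiff_of_subset hsub, hm, hcard]
  rw [← Finset.sum_sdiff hsub, add_comm]
  refine Nat.add_le_add ?_ ?_
  · rw [← hcard', ← smul_eq_mul]
    refine Finset.card_nsmul_le_sum _ _ _ fun e he => ?_
    induction e with | _ u v =>
    simp only [Finset.mem_sdiff, SimpleGraph.mem_edgeFinset, SimpleGraph.mem_edgeSet] at he
    rw [Sym2.lift_mk, ← hg]
    exact girth_sub_one_le_dist hTG hT.connected he.1 he.2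
  · rw [← hcard, Finset.card_eq_sum_ones]
    refine Finset.sum_le_sum fun e he => ?_
    induction e with | _ u v =>
    rw [SimpleGraph.mem_edgeFinset, SimpleGraph.mem_edgeSet] at he
    rw [Sym2.lift_mk]
    exact (SimpleGraph.dist_eq_one_iff_adj.mpr he).ge
end
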